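/- Fix N ≥ 1. For each ω, η ∈ I^N let h_{ωη} : SG' × SG'' → ℝ be continuous, satisfying the matching conditions: (i) if ω = ω_1…ω_{N−1}i and τ = ω_1…ω_{N−1}j then h_{ωη}(p_j, s) = h_{τη}(p_i, s) for all s ∈ SG''; (ii) if η = η_1…η_{N−1}i and ξ = η_1…η_{N−1}j then h_{ωη}(t, q_j) = h_{ωξ}(t, q_i) for all t ∈ SG'; (iii) if ω = ω_1…ω_{N−1}i, τ = ω_1…ω_{N−1}j, η = η_1…η_{N−1}k, ξ = η_1…η_{N−1}l then h_{ωη}(p_j, q_l) = h_{τξ}(p_i, q_k). Let α ∈ ℝ with |α| < 1 be a single constant scaling factor used for all ω, η, and suppose h_{ωη}(p_i, s) = h_{ω'η}(p_j, s) and h_{ωη}(t, q_i) = h_{ωη'}(t, q_j) hold consistently so that constant boundary values are compatible. Then there exists a unique continuous function f : SG' × SG'' → ℝ, with f(p_i, s) = f(p_j, s) and f(t, q_i) = f(t, q_j) for all t ∈ SG', s ∈ SG'', i,j ∈ I, satisfying f(L_ω(t), K_η(s)) = α·f(t,s) + h_{ωη}(t,s) for all ω, η ∈ I^N and all (t,s)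 ∈ SG' × SG''. -/

import Mathlib

noncomputable section

/-- Points of the plane ℝ². -/
abbrev E2 := EuclideanSpace ℝ (Fin 2)

/-- The contraction `L_i(t) = (t + p_i)/2` of the plane towards the vertex `p i`. -/
def Lmap (p : Fin 3 → E2) (i : Fin 3) (t : E2) : E2 := (2 : ℝ)⁻¹ • (t + p i)

/-- `p 1, p 2, p 3` are the vertices of an equilateral triangle: pairwise distinct
points with all three pairwise distances equal. -/
def IsEquilateral (p : Fin 3 → E2) : Prop :=
  Function.Injective p ∧
    ∀ i j k l : Fin 3, i ≠ j → k ≠ l → dist (p i) (p j) = dist (p k) (p l)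

/-- `S` is the Sierpiński gasket with vertex set `p`: the unique nonempty compact set
invariant under the three contractions `L_i(t) = (t + p_i)/2`. -/
def IsSG (p : Fin 3 → E2) (S : Set E2) : Prop :=
  IsEquilateral p ∧ S.Nonempty ∧ IsCompact S ∧ S = ⋃ i : Fin 3, Lmap p i '' S

/-- For a word `ω = ω₁ω₂…ω_n` over `I = {1,2,3}`, the composition
`L_ω = L_{ω₁} ∘ L_{ω₂} ∘ ⋯ ∘ L_{ω_n}`. -/
def wordMap (p : Fin 3 → E2) {n : ℕ} (ω : Fin n → Fin 3) : E2 → E2 :=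
  (List.ofFn fun k => Lmap p (ω k)).foldr (· ∘ ·) id

/-- `f` is a fractal interpolation function for the constant scaling factor `α` and
the data `h` on `SG' × SG''`: it is continuous on `SG' × SG''`, takes equal values on
the boundary slices `{p_i} × SG''` (resp. `SG' × {q_i}`), and satisfies
`f(L_ω(t), K_η(s)) = α·f(t,s) + h_{ωη}(t,s)` for all words `ω, η` of length `N+1`. -/
def IsFIFConst (p q : Fin 3 → E2) (SG' SG'' : Set E2) {N : ℕ} (α : ℝ)
    (h : (Fin (N + 1) → Fin 3) → (Fin (N + 1) → Fin 3) → E2 × E2 → ℝ)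
    (f : E2 × E2 → ℝ) : Prop :=
  ContinuousOn f (SG' ×ˢ SG'') ∧
    (∀ i j : Fin 3, ∀ s ∈ SG'', f (p i, s) = f (p j, s)) ∧
    (∀ i j : Fin 3, ∀ t ∈ SG', f (t, q i) = f (t, q j)) ∧
    ∀ ω η : Fin (N + 1) → Fin 3, ∀ t ∈ SG', ∀ s ∈ SG'',
      f (wordMap p ω t, wordMap q η s) = α * f (t, s) + h ω η (t, s)

/-!
Let `r` be the relation on `S ×ˢ S'` that collapses the vertices of each gasket to a single point.
Barycentric coordinates show that distinct cells of a gasket meet only in images of vertices, so if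
two points of `S ×ˢ S'` have `r`-related images under products of cell maps, then in each coordinate
they are equal and lie in the same cell, or both are vertices. Hence, if `f` respects `r` and the
boundary values of the data `h` do not depend on the vertex or the cell, the functions
`α • f + h ω η` glue along the cells to a continuous function `T f` that again respects `r`. Since
`dist (T f) (T g) ≤ ‖α‖ * dist f g`, `T` is a contraction of the complete space of continuous
functions respecting `r`, and its fixed point is the required function.
-/

open Set Topology

section Gluing

variable {ι X Y Z : Type*} [TopologicalSpace X] [TopologicalSpace Y] [TopologicalSpace Z]

theorem exists_continuousMap_of_finite_cover [Finite ι] [CompactSpace Y] [T2Space X]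
    (Φ : ι → C(Y, X)) (hΦ : ∀ x, ∃ i y, Φ i y = x) (F : ι → C(Y, Z))
    (hF : ∀ i j x y, Φ i x = Φ j y → F i x = F j y) :
    ∃ g : C(X, Z), ∀ i y, g (Φ i y) = F i y := by
  have hsurj : Function.Surjective (ContinuousMap.sigma Φ) := fun x ↦
    let ⟨i, y, hy⟩ := hΦ x
    ⟨⟨i, y⟩, hy⟩
  have hquot : IsQuotientMap (ContinuousMap.sigma Φ) :=
    (map_continuous _).isClosedMap.isQuotientMap (map_continuous _) hsurj
  have hfac : Function.FactorsThrough (ContinuousMap.sigma F) (ContinuousMap.sigma Φ) :=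
    fun _ _ h ↦ hF _ _ _ _ h
  exact ⟨hquot.lift _ hfac, fun i y ↦ DFunLike.congr_fun (hquot.lift_comp _ hfac) ⟨i, y⟩⟩

end Gluing

section ReadBajraktarevic

variable {ι X 𝕜 E : Type*} [TopologicalSpace X] [NormedField 𝕜] [NormedAddCommGroup E]
  [NormedSpace 𝕜 E] {Φ : ι → C(X, X)} {α : 𝕜} {h : ι → C(X, E)} {f f' g g' : C(X, E)}
  {r : X → X → Prop}

/-- `g` is the image of `f` under the Read–Bajraktarević operator with cell maps `Φ`, scaling
factor `α` and data `h`. The operator is encoded as a relation because its value at `f` exists only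
when the functions `α • f + h i` agree wherever the cells overlap. -/
def IsReadBajraktarevicImage (Φ : ι → C(X, X)) (α : 𝕜) (h : ι → C(X, E)) (f g : C(X, E)) : Prop :=
  ∀ i x, g (Φ i x) = α • f x + h i x

theorem IsReadBajraktarevicImage.respects (hΦ : ∀ x, ∃ i y, Φ i y = x)
    (hr : ∀ i j x y, r (Φ i x) (Φ j y) → r x y ∧ h i x = h j y)
    (hf : ∀ x y, r x y → f x = f y) (hg : IsReadBajraktarevicImage Φ α h f g) (x y : X)
    (hxy : r x y) : g x = g y := by
  obtain ⟨i, x, rfl⟩ := hΦ x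
  obtain ⟨j, y, rfl⟩ := hΦ y
  obtain ⟨hxy', hh⟩ := hr i j x y hxy
  rw [hg, hg, hf x y hxy', hh]

theorem isClosed_setOf_respects (r : X → X → Prop) :
    IsClosed {f : C(X, E) | ∀ x y, r x y → f x = f y} := by
  simp only [ofPred_forall]
  exact isClosed_iInter fun x ↦ isClosed_iInter fun y ↦ isClosed_iInter fun _ ↦
    isClosed_eq (continuous_eval_const x) (continuous_eval_const y)

variable [CompactSpace X]

theorem IsReadBajraktarevicImage.dist_le (hΦ : ∀ x, ∃ i y, Φ i y = x)
    (hg : IsReadBajraktarevicImage Φ α h f g) (hg' : IsReadBajraktarevicImage Φ α h f' g') :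
    dist g g' ≤ ‖α‖ * dist f f' := by
  rw [ContinuousMap.dist_le (by positivity)]
  intro x
  obtain ⟨i, y, rfl⟩ := hΦ x
  rw [hg, hg', dist_add_right, dist_smul₀]
  gcongr
  exact ContinuousMap.dist_apply_le_dist y

variable [Finite ι] [T2Space X]

theorem exists_isReadBajraktarevicImage (α : 𝕜) (hΦ : ∀ x, ∃ i y, Φ i y = x) (hrefl : ∀ x, r x x)
    (hr : ∀ i j x y, r (Φ i x) (Φ j y) → r x y ∧ h i x = h j y)
    (hf : ∀ x y, r x y → f x = f y) : ∃ g, IsReadBajraktarevicImage Φ α h f g := by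
  refine exists_continuousMap_of_finite_cover Φ hΦ (fun i ↦ α • f + h i) fun i j x y hxy ↦ ?_
  obtain ⟨hxy', hh⟩ := hr i j x y (hxy ▸ hrefl _)
  simp only [ContinuousMap.add_apply, ContinuousMap.smul_apply, hf x y hxy', hh]

theorem exists_isReadBajraktarevicImage_self [CompleteSpace E] (hα : ‖α‖ < 1)
    (hΦ : ∀ x, ∃ i y, Φ i y = x) (hrefl : ∀ x, r x x)
    (hr : ∀ i j x y, r (Φ i x) (Φ j y) → r x y ∧ h i x = h j y) :
    ∃ f : C(X, E), (∀ x y, r x y → f x = f y) ∧ IsReadBajraktarevicImage Φ α h f f := by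
  let F : Set C(X, E) := {f | ∀ x y, r x y → f x = f y}
  have hstep (f : F) : ∃ g : F, IsReadBajraktarevicImage Φ α h f g :=
    let ⟨g, hg⟩ := exists_isReadBajraktarevicImage α hΦ hrefl hr f.2
    ⟨⟨g, hg.respects hΦ hr f.2⟩, hg⟩
  choose T hT using hstep
  have hcontr : ContractingWith ‖α‖₊ T :=
    ⟨mod_cast hα, LipschitzWith.of_dist_le_mul fun f f' ↦ (hT f).dist_le hΦ (hT f')⟩
  have : CompleteSpace F := (isClosed_setOf_respects r).completeSpace_coe
  have : Nonempty F := ⟨⟨0, fun _ _ _ ↦ rfl⟩⟩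
  have hfix : T hcontr.fixedPoint = hcontr.fixedPoint := hcontr.fixedPoint_isFixedPt
  exact ⟨hcontr.fixedPoint, hcontr.fixedPoint.2, by simpa only [hfix] using hT hcontr.fixedPoint⟩

end ReadBajraktarevic

section InvariantSet

variable {ι κ X Y : Type*} [TopologicalSpace X] [TopologicalSpace Y] {Φ : ι → X → X}
  {Ψ : κ → Y → Y} {K : Set X} {K' : Set Y}

/-- `K` is an invariant set (attractor, if compact and nonempty) of the iterated function system
`Φ`. Continuity of the maps is only asked for on `K`. -/
structure IsInvariantSet (Φ : ι → X → X) (K : Set X) : Prop where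
  continuousOn : ∀ i, ContinuousOn (Φ i) K
  iUnion_image : ⋃ i, Φ i '' K = K

namespace IsInvariantSet

theorem mapsTo (hK : IsInvariantSet Φ K) (i : ι) : MapsTo (Φ i) K K :=
  mapsTo_iff_image_subset.2 (iUnion_subset_iff.1 hK.iUnion_image.subset i)

theorem exists_map_eq (hK : IsInvariantSet Φ K) {x : X} (hx : x ∈ K) :
    ∃ i, ∃ y ∈ K, Φ i y = x :=
  mem_iUnion.1 (hK.iUnion_image.superset hx)

theorem of_mapsTo (hcont : ∀ i, ContinuousOn (Φ i) K) (hmaps : ∀ i, MapsTo (Φ i) K K)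
    (hcover : ∀ x ∈ K, ∃ i, ∃ y ∈ K, Φ i y = x) : IsInvariantSet Φ K :=
  ⟨hcont, (iUnion_subset fun i ↦ (hmaps i).image_subset).antisymm
    fun x hx ↦ mem_iUnion.2 (hcover x hx)⟩

theorem prodMap (hK : IsInvariantSet Φ K) (hK' : IsInvariantSet Ψ K') :
    IsInvariantSet (fun w : ι × κ ↦ Prod.map (Φ w.1) (Ψ w.2)) (K ×ˢ K') := by
  refine .of_mapsTo (fun w ↦ (hK.continuousOn w.1).prodMap (hK'.continuousOn w.2))
    (fun w ↦ (hK.mapsTo w.1).prodMap (hK'.mapsTo w.2)) ?_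
  rintro ⟨x, y⟩ ⟨hx, hy⟩
  obtain ⟨i, u, hu, rfl⟩ := hK.exists_map_eq hx
  obtain ⟨k, v, hv, rfl⟩ := hK'.exists_map_eq hy
  exact ⟨(i, k), (u, v), ⟨hu, hv⟩, rfl⟩

end IsInvariantSet

variable {𝕜 E : Type*} [NormedField 𝕜] [NormedAddCommGroup E] [NormedSpace 𝕜 E]
  {α : 𝕜} {h : ι → X → E}

theorem IsInvariantSet.eqOn_of_selfAffine (hK : IsInvariantSet Φ K) (hcpt : IsCompact K)
    (hα : ‖α‖ < 1) {f g : X → E} (hfc : ContinuousOn f K) (hgc : ContinuousOn g K)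
    (hf : ∀ i, ∀ x ∈ K, f (Φ i x) = α • f x + h i x)
    (hg : ∀ i, ∀ x ∈ K, g (Φ i x) = α • g x + h i x) : EqOn f g K := by
  intro x hx
  obtain ⟨y, hy, hmax⟩ := hcpt.exists_isMaxOn ⟨x, hx⟩
    (f := fun y ↦ dist (f y) (g y)) (continuous_dist.comp_continuousOn (hfc.prodMk hgc))
  obtain ⟨i, z, hz, rfl⟩ := hK.exists_map_eq hy
  have hcontract : dist (f (Φ i z)) (g (Φ i z)) ≤ ‖α‖ * dist (f (Φ i z)) (g (Φ i z)) :=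
    calc dist (f (Φ i z)) (g (Φ i z)) = ‖α‖ * dist (f z) (g z) := by
          rw [hf i z hz, hg i z hz, dist_add_right, dist_smul₀]
      _ ≤ ‖α‖ * dist (f (Φ i z)) (g (Φ i z)) := by gcongr; exact hmax hz
  have hx_le : dist (f x) (g x) ≤ dist (f (Φ i z)) (g (Φ i z)) := hmax hx
  refine dist_le_zero.1 (hx_le.trans ?_)
  nlinarith [dist_nonneg (x := f (Φ i z)) (y := g (Φ i z))]

theorem IsInvariantSet.exists_selfAffine [Finite ι] [T2Space X] [CompleteSpace E]
    (hK : IsInvariantSet Φ K) (hcpt : IsCompact K) (hα : ‖α‖ < 1)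
    (hh : ∀ i, ContinuousOn (h i) K) {r : X → X → Prop} (hrefl : ∀ x, r x x)
    (hr : ∀ i j, ∀ x ∈ K, ∀ y ∈ K, r (Φ i x) (Φ j y) → r x y ∧ h i x = h j y) :
    ∃ f : X → E, ContinuousOn f K ∧ (∀ x ∈ K, ∀ y ∈ K, r x y → f x = f y) ∧
      ∀ i, ∀ x ∈ K, f (Φ i x) = α • f x + h i x := by
  have : CompactSpace K := isCompact_iff_compactSpace.1 hcpt
  let ΦK (i : ι) : C(K, K) := ⟨(hK.mapsTo i).restrict, (hK.continuousOn i).mapsToRestrict _⟩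
  let hC (i : ι) : C(K, E) := ⟨K.domRestrict (h i), (hh i).domRestrict⟩
  have hcover (x : K) : ∃ i y, ΦK i y = x :=
    let ⟨i, y, hy, hyx⟩ := hK.exists_map_eq x.2
    ⟨i, ⟨y, hy⟩, Subtype.ext hyx⟩
  obtain ⟨f, hfr, hf⟩ := exists_isReadBajraktarevicImage_self (h := hC)
    (r := fun x y : K ↦ r x y) hα hcover (fun x ↦ hrefl x)
    fun i j x y ↦ hr i j x x.2 y y.2
  let g : X → E := Function.extend Subtype.val f 0
  have hext (x : K) : g x = f x := Subtype.val_injective.extend_apply f 0 x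
  refine ⟨g, ?_, fun x hx y hy hxy ↦ ?_, fun i x hx ↦ ?_⟩
  · rw [continuousOn_iff_continuous_domRestrict]
    exact f.continuous.congr fun x ↦ (hext x).symm
  · rw [hext ⟨x, hx⟩, hext ⟨y, hy⟩, hfr ⟨x, hx⟩ ⟨y, hy⟩ hxy]
  · rw [hext ⟨x, hx⟩]
    exact (hext (ΦK i ⟨x, hx⟩)).trans (hf i ⟨x, hx⟩)

end InvariantSet

section CellBoundary

variable {ι κ X Y : Type*} {Φ : ι → X → X} {Ψ : κ → Y → Y} {K B : Set X} {K' B' : Set Y}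

/-- `B` is a boundary of `K` for the system `Φ` of cell maps: the cells `Φ i '' K` meet each other
and `B` only in images of points of `B`, and the cell maps identify only points of `B`. For the
gasket, `B` is the set of vertices. -/
structure HasCellBoundary (Φ : ι → X → X) (K B : Set X) : Prop where
  subset : B ⊆ K
  mem_of_map_mem : ∀ i, ∀ x ∈ K, Φ i x ∈ B → x ∈ B
  eq_or_mem : ∀ i j, ∀ x ∈ K, ∀ y ∈ K, Φ i x = Φ j y → (i = j ∧ x = y) ∨ (x ∈ B ∧ y ∈ B)

/-- The relation whose quotient collapses `B` to a point. -/
def CollapseRel (B : Set X) (x y : X) : Prop := x = y ∨ (x ∈ B ∧ y ∈ B)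

theorem HasCellBoundary.eq_or_mem_of_collapseRel (hB : HasCellBoundary Φ K B) {i j : ι} {x y : X}
    (hx : x ∈ K) (hy : y ∈ K) (hxy : CollapseRel B (Φ i x) (Φ j y)) :
    (i = j ∧ x = y) ∨ (x ∈ B ∧ y ∈ B) :=
  hxy.elim (hB.eq_or_mem i j x hx y hy)
    fun h ↦ .inr ⟨hB.mem_of_map_mem i x hx h.1, hB.mem_of_map_mem j y hy h.2⟩

variable [TopologicalSpace X] [TopologicalSpace Y] {𝕜 E : Type*} [NormedField 𝕜]
  [NormedAddCommGroup E] [NormedSpace 𝕜 E] {α : 𝕜}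

theorem exists_continuousOn_prod_selfAffine [Finite ι] [Finite κ] [T2Space X] [T2Space Y]
    [CompleteSpace E] (hK : IsInvariantSet Φ K) (hK' : IsInvariantSet Ψ K') (hcpt : IsCompact K)
    (hcpt' : IsCompact K') (hB : HasCellBoundary Φ K B) (hB' : HasCellBoundary Ψ K' B')
    (hα : ‖α‖ < 1) {h : ι → κ → X × Y → E} (hh : ∀ i k, ContinuousOn (h i k) (K ×ˢ K'))
    (h_left : ∀ i j k, ∀ x ∈ B, ∀ x' ∈ B, ∀ y ∈ K', h i k (x, y) = h j k (x', y))
    (h_right : ∀ i k l, ∀ x ∈ K, ∀ y ∈ B', ∀ y' ∈ B', h i k (x, y) = h i l (x, y')) :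
    ∃ f : X × Y → E, ContinuousOn f (K ×ˢ K') ∧
      (∀ x ∈ B, ∀ x' ∈ B, ∀ y ∈ K', f (x, y) = f (x', y)) ∧
      (∀ x ∈ K, ∀ y ∈ B', ∀ y' ∈ B', f (x, y) = f (x, y')) ∧
      ∀ i k, ∀ x ∈ K, ∀ y ∈ K', f (Φ i x, Ψ k y) = α • f (x, y) + h i k (x, y) := by
  obtain ⟨f, hfc, hfr, hf⟩ := (hK.prodMap hK').exists_selfAffine (hcpt.prod hcpt') hα
    (h := fun w ↦ h w.1 w.2) (fun w ↦ hh w.1 w.2)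
    (r := fun z z' ↦ CollapseRel B z.1 z'.1 ∧ CollapseRel B' z.2 z'.2)
    (fun z ↦ ⟨.inl rfl, .inl rfl⟩) <| by
      rintro ⟨i, k⟩ ⟨j, l⟩ ⟨x, y⟩ ⟨hx, hy⟩ ⟨x', y'⟩ ⟨hx', hy'⟩ ⟨hrx, hry⟩
      have hcellx := hB.eq_or_mem_of_collapseRel hx hx' hrx
      have hcelly := hB'.eq_or_mem_of_collapseRel hy hy' hry
      refine ⟨⟨hcellx.imp_left And.right, hcelly.imp_left And.right⟩, ?_⟩
      have hmove_left : h i k (x, y) = h j k (x', y) := by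
        rcases hcellx with ⟨rfl, rfl⟩ | ⟨hxB, hxB'⟩
        · rfl
        · exact h_left i j k x hxB x' hxB' y hy
      have hmove_right : h j k (x', y) = h j l (x', y') := by
        rcases hcelly with ⟨rfl, rfl⟩ | ⟨hyB, hyB'⟩
        · rfl
        · exact h_right j k l x' hx' y hyB y' hyB'
      exact hmove_left.trans hmove_right
  refine ⟨f, hfc, fun x hx x' hx' y hy ↦ ?_, fun x hx y hy y' hy' ↦ ?_,
    fun i k x hx y hy ↦ hf (i, k) (x, y) ⟨hx, hy⟩⟩
  · exact hfr _ ⟨hB.subset hx, hy⟩ _ ⟨hB.subset hx', hy⟩ ⟨.inr ⟨hx, hx'⟩, .inl rfl⟩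
  · exact hfr _ ⟨hx, hB'.subset hy⟩ _ ⟨hx, hB'.subset hy'⟩ ⟨.inl rfl, .inr ⟨hy, hy'⟩⟩

end CellBoundary

section Words

variable {ι X : Type*} {Φ : ι → X → X} {K B : Set X}

/-- The composition `Φ_{ω₁} ∘ ⋯ ∘ Φ_{ω_n}` along a word `ω`; `wordMap` is the case of the
contractions `Lmap p`. -/
def wordComp (Φ : ι → X → X) {n : ℕ} (ω : Fin n → ι) : X → X :=
  (List.ofFn fun k ↦ Φ (ω k)).foldr (· ∘ ·) id

theorem wordComp_zero (Φ : ι → X → X) (ω : Fin 0 → ι) : wordComp Φ ω = id := by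
  simp only [wordComp, List.ofFn_zero, List.foldr_nil]

theorem wordComp_succ (Φ : ι → X → X) {n : ℕ} (ω : Fin (n + 1) → ι) :
    wordComp Φ ω = Φ (ω 0) ∘ wordComp Φ (Fin.tail ω) := by
  simp only [wordComp, List.ofFn_succ, List.foldr_cons, Fin.tail]

theorem mapsTo_wordComp (hK : ∀ i, MapsTo (Φ i) K K) {n : ℕ} (ω : Fin n → ι) :
    MapsTo (wordComp Φ ω) K K := by
  induction n with
  | zero => simpa only [wordComp_zero] using mapsTo_id K
  | succ n ih => simpa only [wordComp_succ] using (hK _).comp (ih _)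

theorem continuousOn_wordComp [TopologicalSpace X] (hcont : ∀ i, ContinuousOn (Φ i) K)
    (hK : ∀ i, MapsTo (Φ i) K K) {n : ℕ} (ω : Fin n → ι) : ContinuousOn (wordComp Φ ω) K := by
  induction n with
  | zero => simpa only [wordComp_zero] using continuousOn_id
  | succ n ih =>
    simpa only [wordComp_succ] using (hcont _).comp (ih _) (mapsTo_wordComp hK _)

theorem exists_wordComp_eq (hcover : ∀ x ∈ K, ∃ i, ∃ y ∈ K, Φ i y = x) (n : ℕ) {x : X}
    (hx : x ∈ K) : ∃ ω : Fin n → ι, ∃ y ∈ K, wordComp Φ ω y = x := by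
  induction n generalizing x with
  | zero => exact ⟨Fin.elim0, x, hx, by rw [wordComp_zero, id]⟩
  | succ n ih =>
    obtain ⟨i, y, hy, rfl⟩ := hcover x hx
    obtain ⟨ω, z, hz, rfl⟩ := ih hy
    refine ⟨Fin.cons i ω, z, hz, ?_⟩
    rw [wordComp_succ, Fin.cons_zero, Fin.tail_cons, Function.comp_apply]

theorem IsInvariantSet.wordComp [TopologicalSpace X] (hK : IsInvariantSet Φ K) (n : ℕ) :
    IsInvariantSet (fun ω : Fin n → ι ↦ wordComp Φ ω) K :=
  .of_mapsTo (continuousOn_wordComp hK.continuousOn hK.mapsTo) (mapsTo_wordComp hK.mapsTo)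
    fun _ ↦ exists_wordComp_eq (fun _ ↦ hK.exists_map_eq) n

theorem HasCellBoundary.wordComp (hB : HasCellBoundary Φ K B) (hK : ∀ i, MapsTo (Φ i) K K)
    (n : ℕ) : HasCellBoundary (fun ω : Fin n → ι ↦ wordComp Φ ω) K B := by
  induction n with
  | zero =>
    refine ⟨hB.subset, fun ω x _ hx ↦ ?_, fun ω τ x _ y _ hxy ↦ .inl ⟨Subsingleton.elim _ _, ?_⟩⟩
    · rwa [wordComp_zero] at hx
    · simpa only [wordComp_zero, id] using hxy
  | succ n ih =>
    have hmem (ω : Fin n → ι) {x : X} (hx : x ∈ K) : _root_.wordComp Φ ω x ∈ K :=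
      mapsTo_wordComp hK ω hx
    refine ⟨hB.subset, fun ω x hx hωx ↦ ?_, fun ω τ x hx y hy hxy ↦ ?_⟩
    · rw [wordComp_succ] at hωx
      exact ih.mem_of_map_mem _ x hx (hB.mem_of_map_mem _ _ (hmem _ hx) hωx)
    · simp only [wordComp_succ, Function.comp_apply] at hxy
      rcases hB.eq_or_mem _ _ _ (hmem _ hx) _ (hmem _ hy) hxy with ⟨hhead, htail⟩ | ⟨hxB, hyB⟩
      · refine (ih.eq_or_mem _ _ x hx y hy htail).imp_left (And.imp_left fun hωτ ↦ ?_)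
        rw [← Fin.cons_self_tail ω, ← Fin.cons_self_tail τ, hhead, hωτ]
      · exact .inr ⟨ih.mem_of_map_mem _ x hx hxB, ih.mem_of_map_mem _ y hy hyB⟩

end Words

section Gasket

variable {ι V P : Type*} [NormedAddCommGroup V] [NormedSpace ℝ V] [MetricSpace P]
  [NormedAddTorsor V P] {p : ι → P} {S : Set P}

/-- `S` is the Sierpiński gasket with vertices `p i`, the attractor of the contractions with
ratio `1 / 2` towards the vertices. -/
structure IsGasket (p : ι → P) (S : Set P) : Prop where
  nonempty : S.Nonempty
  isCompact : IsCompact S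
  iUnion_image : ⋃ i, (fun t ↦ midpoint ℝ t (p i)) '' S = S

namespace IsGasket

theorem isInvariantSet (hS : IsGasket p S) :
    IsInvariantSet (fun i t ↦ midpoint ℝ t (p i)) S :=
  ⟨fun _ ↦ (continuous_id.lineMap continuous_const continuous_const).continuousOn,
    hS.iUnion_image⟩

theorem vertex_mem (hS : IsGasket p S) (i : ι) : p i ∈ S := by
  obtain ⟨t, ht, hmin⟩ := hS.isCompact.exists_isMinOn hS.nonempty
    (f := fun t ↦ dist t (p i)) (by fun_prop)
  have hle : dist t (p i) ≤ dist (midpoint ℝ t (p i)) (p i) :=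
    hmin (hS.isInvariantSet.mapsTo i ht)
  rw [dist_midpoint_right, Real.norm_two] at hle
  have hti : t = p i := dist_le_zero.1 (by linarith)
  exact hti ▸ ht

end IsGasket

section AffineBasis

theorem affineMap_midpoint_eq_half_add (f : P →ᵃ[ℝ] ℝ) (s t : P) :
    f (midpoint ℝ s t) = (f s + f t) / 2 := by
  rw [AffineMap.map_midpoint, midpoint_eq_smul_add, invOf_eq_inv, smul_eq_mul, inv_mul_eq_div]

variable [Finite ι] {b : AffineBasis ι ℝ P}

theorem eq_vertex_of_one_le_coord {t : P} {i : ι} (hnonneg : ∀ j, 0 ≤ b.coord j t)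
    (hi : 1 ≤ b.coord i t) : t = b i := by
  have := Fintype.ofFinite ι
  refine b.ext_elem fun j ↦ ?_
  rcases eq_or_ne j i with rfl | hji
  · have hle : b.coord j t ≤ ∑ k, b.coord k t :=
      Finset.single_le_sum (fun k _ ↦ hnonneg k) (Finset.mem_univ j)
    rw [b.sum_coord_apply_eq_one] at hle
    rw [b.coord_apply_eq, hle.antisymm hi]
  · have hle : b.coord j t + b.coord i t ≤ ∑ k, b.coord k t :=
      Finset.add_le_sum (fun k _ ↦ hnonneg k) (Finset.mem_univ j) (Finset.mem_univ i) hji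
    rw [b.sum_coord_apply_eq_one] at hle
    rw [b.coord_apply_ne hji]
    linarith [hnonneg j]

namespace IsGasket

theorem coord_nonneg (hS : IsGasket b S) (i : ι) {t : P} (ht : t ∈ S) : 0 ≤ b.coord i t := by
  have := b.finiteDimensional
  obtain ⟨s, hs, hmin⟩ := hS.isCompact.exists_isMinOn hS.nonempty
    (b.coord i).continuous_of_finiteDimensional.continuousOn
  obtain ⟨j, u, hu, rfl⟩ := hS.isInvariantSet.exists_map_eq hs
  have hvertex : 0 ≤ b.coord i (b j) := by
    classical
    rw [b.coord_apply]
    split_ifs <;> norm_num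
  have hle_u : b.coord i (midpoint ℝ u (b j)) ≤ b.coord i u := hmin hu
  have hle_t : b.coord i (midpoint ℝ u (b j)) ≤ b.coord i t := hmin ht
  rw [affineMap_midpoint_eq_half_add] at hle_u hle_t
  linarith

theorem eq_vertex_of_midpoint_eq_midpoint (hS : IsGasket b S) {i j : ι} (hij : i ≠ j) {t u : P}
    (ht : t ∈ S) (hu : u ∈ S) (h : midpoint ℝ t (b i) = midpoint ℝ u (b j)) : t = b j := by
  refine eq_vertex_of_one_le_coord (fun k ↦ hS.coord_nonneg k ht) ?_
  have hcoord := congrArg (b.coord j) h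
  rw [affineMap_midpoint_eq_half_add, affineMap_midpoint_eq_half_add, b.coord_apply_ne hij.symm,
    b.coord_apply_eq] at hcoord
  linarith [hS.coord_nonneg j hu]

theorem eq_vertex_of_midpoint_eq_vertex (hS : IsGasket b S) {i j : ι} {t : P} (ht : t ∈ S)
    (h : midpoint ℝ t (b i) = b j) : t = b j := by
  rcases eq_or_ne i j with rfl | hij
  · rwa [midpoint_eq_right_iff] at h
  · exact hS.eq_vertex_of_midpoint_eq_midpoint hij ht (hS.vertex_mem j) (by rw [h, midpoint_self])

theorem hasCellBoundary (hS : IsGasket b S) :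
    HasCellBoundary (fun i t ↦ midpoint ℝ t (b i)) S (range b) where
  subset := range_subset_iff.2 hS.vertex_mem
  mem_of_map_mem i t ht := by
    rintro ⟨j, hj⟩
    exact ⟨j, (hS.eq_vertex_of_midpoint_eq_vertex ht hj.symm).symm⟩
  eq_or_mem i j t ht u hu h := by
    rcases eq_or_ne i j with rfl | hij
    · have hreflect : AffineEquiv.pointReflection ℝ (midpoint ℝ u (b i)) t =
          AffineEquiv.pointReflection ℝ (midpoint ℝ u (b i)) u :=
        (midpoint_eq_iff.1 h).trans (midpoint_eq_iff.1 rfl).symm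
      exact .inl ⟨rfl, (AffineEquiv.pointReflection ℝ _).injective hreflect⟩
    · exact .inr ⟨⟨j, (hS.eq_vertex_of_midpoint_eq_midpoint hij ht hu h).symm⟩,
        ⟨i, (hS.eq_vertex_of_midpoint_eq_midpoint hij.symm hu ht h.symm).symm⟩⟩

end IsGasket

end AffineBasis

end Gasket

section Equilateral

variable {p : Fin 3 → E2} {S : Set E2}

theorem IsEquilateral.affineIndependent (hp : IsEquilateral p) : AffineIndependent ℝ p := by
  have hpos : 0 < dist (p 0) (p 1) := dist_pos.2 (hp.1.ne (by decide))
  have h12 : dist (p 1) (p 2) = dist (p 0) (p 1) := hp.2 _ _ _ _ (by decide) (by decide)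
  have h20 : dist (p 2) (p 0) = dist (p 0) (p 1) := hp.2 _ _ _ _ (by decide) (by decide)
  rw [affineIndependent_iff_not_collinear_of_ne (i₁ := 0) (i₂ := 1) (i₃ := 2) (by decide)
    (by decide) (by decide)]
  intro hcol
  rcases hcol.wbtw_or_wbtw_or_wbtw with h | h | h
  all_goals
    have hadd := h.dist_add_dist
    simp only [dist_comm (p 1) (p 0), dist_comm (p 2) (p 1), dist_comm (p 0) (p 2), h12, h20]
      at hadd
    linarith

/-- The vertices of an equilateral triangle as an affine basis of the plane. -/
def IsEquilateral.affineBasis (hp : IsEquilateral p) : AffineBasis (Fin 3) ℝ E2 :=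
  ⟨p, hp.affineIndependent,
    hp.affineIndependent.affineSpan_eq_top_iff_card_eq_finrank_add_one.2 (by simp)⟩

theorem Lmap_eq_midpoint (p : Fin 3 → E2) (i : Fin 3) (t : E2) :
    Lmap p i t = midpoint ℝ t (p i) := by
  rw [midpoint_eq_smul_add, invOf_eq_inv, Lmap]

theorem wordMap_eq_wordComp (p : Fin 3 → E2) {n : ℕ} (ω : Fin n → Fin 3) :
    wordMap p ω = wordComp (fun i t ↦ midpoint ℝ t (p i)) ω := by
  simp only [wordMap, wordComp, ← Lmap_eq_midpoint]

theorem IsSG.isGasket (hS : IsSG p S) : IsGasket hS.1.affineBasis S :=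
  ⟨hS.2.1, hS.2.2.1, by
    simp only [← Lmap_eq_midpoint]
    exact hS.2.2.2.symm⟩

end Equilateral

theorem stmt_17_general {ι κ V W P Q 𝕜 E : Type*} [Finite ι] [Finite κ]
    [NormedAddCommGroup V] [NormedSpace ℝ V] [MetricSpace P] [NormedAddTorsor V P]
    [NormedAddCommGroup W] [NormedSpace ℝ W] [MetricSpace Q] [NormedAddTorsor W Q]
    [NormedField 𝕜] [NormedAddCommGroup E] [NormedSpace 𝕜 E] [CompleteSpace E]
    {p : AffineBasis ι ℝ P} {q : AffineBasis κ ℝ Q} {S : Set P} {S' : Set Q}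
    (hS : IsGasket p S) (hS' : IsGasket q S') {m n : ℕ} {α : 𝕜} (hα : ‖α‖ < 1)
    {h : (Fin m → ι) → (Fin n → κ) → P × Q → E}
    (hh : ∀ ω η, ContinuousOn (h ω η) (S ×ˢ S'))
    (h_left : ∀ ω ω' η i j, ∀ s ∈ S', h ω η (p i, s) = h ω' η (p j, s))
    (h_right : ∀ ω η η' i j, ∀ t ∈ S, h ω η (t, q i) = h ω η' (t, q j)) :
    ∃ f : P × Q → E,
      (ContinuousOn f (S ×ˢ S') ∧
        (∀ i j, ∀ s ∈ S', f (p i, s) = f (p j, s)) ∧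
        (∀ i j, ∀ t ∈ S, f (t, q i) = f (t, q j)) ∧
        ∀ ω η, ∀ t ∈ S, ∀ s ∈ S',
          f (wordComp (fun i t ↦ midpoint ℝ t (p i)) ω t,
            wordComp (fun i s ↦ midpoint ℝ s (q i)) η s) = α • f (t, s) + h ω η (t, s)) ∧
      ∀ g : P × Q → E, ContinuousOn g (S ×ˢ S') →
        (∀ ω η, ∀ t ∈ S, ∀ s ∈ S',
          g (wordComp (fun i t ↦ midpoint ℝ t (p i)) ω t,
            wordComp (fun i s ↦ midpoint ℝ s (q i)) η s) = α • g (t, s) + h ω η (t, s)) →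
        EqOn f g (S ×ˢ S') := by
  have hinv := hS.isInvariantSet.wordComp m
  have hinv' := hS'.isInvariantSet.wordComp n
  obtain ⟨f, hfc, hf_left, hf_right, hf⟩ := exists_continuousOn_prod_selfAffine hinv hinv'
    hS.isCompact hS'.isCompact (hS.hasCellBoundary.wordComp hS.isInvariantSet.mapsTo m)
    (hS'.hasCellBoundary.wordComp hS'.isInvariantSet.mapsTo n) hα hh
    (by simpa only [forall_mem_range] using h_left)
    (by rintro ω η η' t ht _ ⟨i, rfl⟩ _ ⟨j, rfl⟩; exact h_right ω η η' i j t ht)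
  refine ⟨f, ⟨hfc, fun i j s hs ↦ hf_left _ (mem_range_self i) _ (mem_range_self j) s hs,
    fun i j t ht ↦ hf_right t ht _ (mem_range_self i) _ (mem_range_self j), hf⟩, fun g hgc hg ↦ ?_⟩
  exact (hinv.prodMap hinv').eqOn_of_selfAffine (hS.isCompact.prod hS'.isCompact) hα
    (h := fun w : (Fin m → ι) × (Fin n → κ) ↦ h w.1 w.2) hfc hgc
    (fun w z hz ↦ hf w.1 w.2 z.1 hz.1 z.2 hz.2)
    fun w z hz ↦ hg w.1 w.2 z.1 hz.1 z.2 hz.2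

/-- The variant of the construction of the fractal interpolation function on
`SG' × SG''` with a single constant scaling factor `α`, `|α| < 1`: under the matching
conditions (i)–(iii) and the compatibility of the boundary values of the maps
`h_{ωη}`, there is a unique continuous `f` with equal values on corresponding
boundary slices satisfying `f(L_ω(t), K_η(s)) = α·f(t,s) + h_{ωη}(t,s)`. -/
theorem stmt_17 (p q : Fin 3 → E2) (SG' SG'' : Set E2)
    (hSG' : IsSG p SG') (hSG'' : IsSG q SG'') (N : ℕ) (α : ℝ) (hα : |α| < 1)
    (h : (Fin (N + 1) → Fin 3) → (Fin (N + 1) → Fin 3) → E2 × E2 → ℝ)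
    (hhcont : ∀ ω η, ContinuousOn (h ω η) (SG' ×ˢ SG''))
    -- matching condition (i)
    (hmatch1 : ∀ ω τ η : Fin (N + 1) → Fin 3,
      (∀ k : Fin (N + 1), k ≠ Fin.last N → ω k = τ k) →
      ∀ s ∈ SG'', h ω η (p (τ (Fin.last N)), s) = h τ η (p (ω (Fin.last N)), s))
    -- matching condition (ii)
    (hmatch2 : ∀ ω η ξ : Fin (N + 1) → Fin 3,
      (∀ k : Fin (N + 1), k ≠ Fin.last N → η k = ξ k) →
      ∀ t ∈ SG', h ω η (t, q (ξ (Fin.last N))) = h ω ξ (t, q (η (Fin.last N))))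
    -- matching condition (iii)
    (hmatch3 : ∀ ω τ η ξ : Fin (N + 1) → Fin 3,
      (∀ k : Fin (N + 1), k ≠ Fin.last N → ω k = τ k) →
      (∀ k : Fin (N + 1), k ≠ Fin.last N → η k = ξ k) →
      h ω η (p (τ (Fin.last N)), q (ξ (Fin.last N))) =
        h τ ξ (p (ω (Fin.last N)), q (η (Fin.last N))))
    -- compatibility of boundary values of `h`
    (hcomp1 : ∀ ω ω' η : Fin (N + 1) → Fin 3, ∀ i j : Fin 3, ∀ s ∈ SG'',
      h ω η (p i, s) = h ω' η (p j, s))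
    (hcomp2 : ∀ ω η η' : Fin (N + 1) → Fin 3, ∀ i j : Fin 3, ∀ t ∈ SG',
      h ω η (t, q i) = h ω η' (t, q j)) :
    ∃ f : E2 × E2 → ℝ, IsFIFConst p q SG' SG'' α h f ∧
      ∀ g : E2 × E2 → ℝ, IsFIFConst p q SG' SG'' α h g →
        Set.EqOn f g (SG' ×ˢ SG'') := by
  obtain ⟨f, hf, hf_unique⟩ :=
    stmt_17_general hSG'.isGasket hSG''.isGasket (α := α) hα hhcont hcomp1 hcomp2
  simp only [IsFIFConst, wordMap_eq_wordComp]
  exact ⟨f, hf, fun g hg ↦ hf_unique g hg.1 hg.2.2.2⟩
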